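/- Every extreme point of the convex set of discrete POVMs on a finite outcome set whose effects pairwise commute is a projection-valued measure: each A_n satisfies A_n² = A_n. -/

import Mathlib

set_option maxHeartbeats 1000000
set_option synthInstance.maxHeartbeats 1000000

open scoped ComplexOrder

variable {H : Type*} [NormedAddCommGroup H] [InnerProductSpace ℂ H] [CompleteSpace H]

/-- A discrete POVM on the outcome set `{1, …, N}`: positive operators summing to `1`. -/
def IsDiscretePOVM {N : ℕ} {H : Type*} [NormedAddCommGroup H] [InnerProductSpace ℂ H]
    [CompleteSpace H] (A : Fin N → H →L[ℂ] H) : Prop :=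
  (∀ n, 0 ≤ A n) ∧ ∑ n, A n = 1

/-- Extremality of a discrete POVM in the convex set of discrete POVMs on the same
outcome set. -/
def IsExtremeDiscretePOVM {N : ℕ} {H : Type*} [NormedAddCommGroup H] [InnerProductSpace ℂ H]
    [CompleteSpace H] (A : Fin N → H →L[ℂ] H) : Prop :=
  IsDiscretePOVM A ∧
  ∀ (B C : Fin N → H →L[ℂ] H) (t : ℝ), 0 < t → t < 1 →
    IsDiscretePOVM B → IsDiscretePOVM C →
    (∀ n, A n = (t : ℂ) • B n + ((1 - t : ℝ) : ℂ) • C n) → B = A ∧ C = A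

/-- Main theorem (discrete case): every extreme commutative discrete POVM is
projection valued. -/
theorem stmt_8 [TopologicalSpace.SeparableSpace H] {N : ℕ} (A : Fin N → H →L[ℂ] H)
    (hext : IsExtremeDiscretePOVM A)
    (hcomm : ∀ k l, A k * A l = A l * A k) :
    ∀ n, A n * A n = A n := by
  intro k
  obtain ⟨⟨hpos, hsum⟩, hex⟩ := hext
  have hle : A k ≤ 1 := by
    rw [← hsum]
    exact Finset.single_le_sum (fun i _ => hpos i) (Finset.mem_univ k)
  have hle' : 0 ≤ 1 - A k := sub_nonneg.mpr hle
  have hc : ∀ k l, Commute (A k) (A l) := hcomm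
  have hprod : ∀ l, 0 ≤ A k * A l := fun l => (hc k l).mul_nonneg (hpos k) (hpos l)
  have hprod' : ∀ l, 0 ≤ A l - A k * A l := fun l => by
    have h := ((Commute.one_left (A l)).sub_left (hc k l)).mul_nonneg hle' (hpos l)
    rwa [sub_mul, one_mul] at h
  let D : Fin N → H →L[ℂ] H := fun l => (if l = k then A k else 0) - A k * A l
  have hD : ∑ l, D l = 0 := by
    simp [D, Finset.sum_sub_distrib, ← Finset.mul_sum, hsum]
  have hB : IsDiscretePOVM (fun l => A l + D l) := by
    refine ⟨fun l => ?_, by rw [Finset.sum_add_distrib, hD, hsum, add_zero]⟩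
    by_cases h : l = k
    · subst h
      simpa [D] using add_nonneg (hpos l) (hprod' l)
    · simpa [D, h, sub_eq_add_neg] using hprod' l
  have hC : IsDiscretePOVM (fun l => A l - D l) := by
    refine ⟨fun l => ?_, by rw [Finset.sum_sub_distrib, hD, hsum, sub_zero]⟩
    by_cases h : l = k
    · subst h
      simpa [D] using hprod l
    · simpa [D, h] using add_nonneg (hpos l) (hprod l)
  have key := (hex _ _ (1/2) (by norm_num) (by norm_num) hB hC (fun n => by
    have e : ((1 - 1/2 : ℝ) : ℂ) = ((1/2 : ℝ) : ℂ) := by norm_num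
    rw [e, ← smul_add, add_add_sub_cancel, ← two_smul ℂ (A n), smul_smul]
    norm_num)).1
  have hk := congrFun key k
  simp only [D, if_true, add_eq_left] at hk
  exact (sub_eq_zero.mp hk).symm
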